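/- Let γ > 1, τ > 0, R > 0, and let ρ₀, S₀ ∈ C¹(ℝ) with ρ₀(x) > 0 for all x, ρ₀(x) = 1 and S₀(x) = 0 for |x| ≥ R, and ∫_ℝ (ρ₀(x) − 1) dx ≥ 0. Set σ := √(γ + 1/τ) and choose σ̃ > 0 with σ̃² = max{σ², 1/(8 max ρ₀)}, and L > 0 with (L/2) min ρ₀ > max{√(8 max ρ₀), 16 σ̃ max ρ₀}. Put H₀ := ∫_ℝ [ (ρ₀^γ − 1 − γ(ρ₀ − 1))/(γ−1) + τρ₀S₀²/2 ] dx, and choose an even integer M ≥ max{4, R} with H₀ + (max ρ₀) L²M ≤ 2σ̃M² max ρ₀. Let u₀ : ℝ → ℝ be continuously differentiable, odd, with |u₀| ≤ L, u₀ = L on [1, M−1], u₀ = 0 outside [−M, M], and ∫ u₀² ≤ 2L²M. Suppose T ∈ (0, ∞] and (ρ, u, S) ∈ C¹([0,T) × ℝ; ℝ³) solves the relaxation system ρ_t + (ρu)_x = 0, ρu_t + ρuu_x + (ρ^γ)_x = S_x, τρ(S_t + uS_x) − u_x = −S with ρ > 0, with initial data (ρ(0,·), u(0,·), S(0,·)) =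 (ρ₀, u₀, S₀), such that (ρ, u, S) and their first-order partial derivatives are bounded on [0,t] × ℝ for each t ∈ [0,T). Then T < ∞: the solution cannot exist globally in time. -/

import Mathlib

open MeasureTheory

/-- Time partial derivative, taken within the time interval `[0, T)`, `T ∈ (0,∞]`
being modelled as an extended real number. -/
noncomputable def pderivT (T : EReal) (f : ℝ × ℝ → ℝ) (p : ℝ × ℝ) : ℝ :=
  derivWithin (fun s => f (s, p.2)) {s : ℝ | 0 ≤ s ∧ (s : EReal) < T} p.1

/-- Space partial derivative. -/
noncomputable def pderivX (f : ℝ × ℝ → ℝ) (p : ℝ × ℝ) : ℝ :=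
  deriv (fun y => f (p.1, y)) p.2


/-- Time slice derivative. -/
lemma bu_hasDerivAt_t {f : ℝ × ℝ → ℝ} (hf : ContDiffOn ℝ 1 f {p : ℝ × ℝ | 0 < p.1})
    {t : ℝ} (ht : 0 < t) (x : ℝ) :
    HasDerivAt (fun s => f (s, x)) (fderiv ℝ f (t, x) (1, 0)) t := by
  have ho : IsOpen {p : ℝ × ℝ | 0 < p.1} := isOpen_lt continuous_const continuous_fst
  have h1 : HasFDerivAt f (fderiv ℝ f (t, x)) (t, x) :=
    ((hf.contDiffAt (ho.mem_nhds (by simpa using ht))).differentiableAt (by norm_num)).hasFDerivAt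
  have h2 : HasDerivAt (fun s : ℝ => (s, x)) ((1 : ℝ), (0 : ℝ)) t :=
    (hasDerivAt_id t).prodMk (hasDerivAt_const t x)
  exact h1.comp_hasDerivAt t h2

lemma bu_hasDerivAt_x {f : ℝ × ℝ → ℝ} (hf : ContDiffOn ℝ 1 f {p : ℝ × ℝ | 0 < p.1})
    {t : ℝ} (ht : 0 < t) (x : ℝ) :
    HasDerivAt (fun y => f (t, y)) (fderiv ℝ f (t, x) (0, 1)) x := by
  have ho : IsOpen {p : ℝ × ℝ | 0 < p.1} := isOpen_lt continuous_const continuous_fst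
  have h1 : HasFDerivAt f (fderiv ℝ f (t, x)) (t, x) :=
    ((hf.contDiffAt (ho.mem_nhds (by simpa using ht))).differentiableAt (by norm_num)).hasFDerivAt
  have h2 : HasDerivAt (fun y : ℝ => (t, y)) ((0 : ℝ), (1 : ℝ)) x :=
    (hasDerivAt_const x t).prodMk (hasDerivAt_id x)
  exact h1.comp_hasDerivAt x h2

lemma bu_cont_slice {f : ℝ × ℝ → ℝ} {s : Set (ℝ × ℝ)} (hf : ContinuousOn f s)
    {t : ℝ} (ht : ∀ x, (t, x) ∈ s) : Continuous (fun x => f (t, x)) := by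
  have : Continuous (fun x : ℝ => (t, x)) := by fun_prop
  exact hf.comp_continuous this ht

/-- Balance law in integrated form. -/
lemma bu_balance {e f g : ℝ × ℝ → ℝ} (he : ContDiffOn ℝ 1 e {p : ℝ × ℝ | 0 < p.1})
    (hf : ContDiffOn ℝ 1 f {p : ℝ × ℝ | 0 < p.1})
    (h : ∀ t : ℝ, 0 < t → ∀ x : ℝ,
      deriv (fun s => e (s, x)) t + deriv (fun y => f (t, y)) x = g (t, x))
    (a b : ℝ) {t : ℝ} (ht : 0 < t) :
    HasDerivAt (fun s => ∫ x in a..b, e (s, x))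
      ((∫ x in a..b, g (t, x)) - (f (t, b) - f (t, a))) t := by
  have ho : IsOpen {p : ℝ × ℝ | 0 < p.1} := isOpen_lt continuous_const continuous_fst
  have hce := he.continuousOn_fderiv_of_isOpen ho le_rfl
  have hcf := hf.continuousOn_fderiv_of_isOpen ho le_rfl
  have hcet : ContinuousOn (fun p => fderiv ℝ e p (1, 0)) {p : ℝ × ℝ | 0 < p.1} :=
    hce.clm_apply continuousOn_const
  have hcfx : ContinuousOn (fun p => fderiv ℝ f p (0, 1)) {p : ℝ × ℝ | 0 < p.1} :=
    hcf.clm_apply continuousOn_const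
  have hK : IsCompact (Set.Icc (t/2) (2*t) ×ˢ Set.uIcc a b) := isCompact_Icc.prod isCompact_uIcc
  obtain ⟨C, hC⟩ := hK.exists_bound_of_continuousOn (hcet.mono (by
    rintro ⟨s, x⟩ ⟨hs, -⟩
    simp only [Set.mem_Icc, Set.mem_ofPred_eq] at hs ⊢; linarith [hs.1]))
  have key := intervalIntegral.hasDerivAt_integral_of_dominated_loc_of_deriv_le
    (μ := volume) (a := a) (b := b) (bound := fun _ => C) (s := Set.Icc (t/2) (2*t)) (x₀ := t)
    (F := fun s x => e (s, x)) (F' := fun s x => fderiv ℝ e (s, x) (1, 0))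
    (Icc_mem_nhds (by linarith) (by linarith))
    (by
      filter_upwards [lt_mem_nhds ht] with s hs
      exact (bu_cont_slice he.continuousOn (fun x => hs)).aestronglyMeasurable)
    ((bu_cont_slice he.continuousOn (fun x => ht)).intervalIntegrable _ _)
    ((bu_cont_slice hcet (fun x => ht)).aestronglyMeasurable)
    (Filter.Eventually.of_forall fun x hx s hs => hC (s, x) ⟨hs, Set.uIoc_subset_uIcc hx⟩)
    (intervalIntegrable_const)
    (Filter.Eventually.of_forall fun x _ s hs => bu_hasDerivAt_t he (by linarith [hs.1]) x)
  have h3 : ∫ x in a..b, fderiv ℝ f (t, x) (0, 1) = f (t, b) - f (t, a) :=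
    intervalIntegral.integral_eq_sub_of_hasDerivAt (fun x _ => bu_hasDerivAt_x hf ht x)
      ((bu_cont_slice hcfx (fun x => ht)).intervalIntegrable _ _)
  have h4 : (∫ x in a..b, fderiv ℝ e (t, x) (1, 0))
      = (∫ x in a..b, g (t, x)) - (f (t, b) - f (t, a)) := by
    rw [← h3, ← intervalIntegral.integral_sub]
    · refine intervalIntegral.integral_congr fun x _ => ?_
      have := h t ht x
      rw [(bu_hasDerivAt_t he ht x).deriv, (bu_hasDerivAt_x hf ht x).deriv] at this
      linarith
    · have : (fun x => g (t, x)) = fun x => fderiv ℝ e (t, x) (1, 0) + fderiv ℝ f (t, x) (0, 1) := by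
        funext x
        have := h t ht x
        rw [(bu_hasDerivAt_t he ht x).deriv, (bu_hasDerivAt_x hf ht x).deriv] at this
        linarith
      rw [this]
      exact ((bu_cont_slice hcet (fun x => ht)).add
        (bu_cont_slice hcfx (fun x => ht))).intervalIntegrable _ _
    · exact (bu_cont_slice hcfx (fun x => ht)).intervalIntegrable _ _
  rw [← h4]
  exact key.2

lemma bu_cont_integral {e : ℝ × ℝ → ℝ} (he : ContinuousOn e {p : ℝ × ℝ | 0 ≤ p.1}) (a b : ℝ) :
    ContinuousOn (fun t => ∫ x in a..b, e (t, x)) (Set.Ici 0) := by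
  have h1 : Continuous (fun p : ℝ × ℝ => e (max p.1 0, p.2)) :=
    he.comp_continuous (by fun_prop) (fun p => by simp)
  have h2 : Continuous (fun t => ∫ x in a..b, e (max t 0, x)) :=
    intervalIntegral.continuous_parametric_intervalIntegral_of_continuous' h1 a b
  refine h2.continuousOn.congr fun t ht => ?_
  simp only [Set.mem_Ici] at ht
  simp only [max_eq_left ht]

lemma bu_supp_integral {h : ℝ → ℝ} {X B : ℝ} (hX : 0 ≤ X) (hXB : X ≤ B)
    (h0 : ∀ x, X < |x| → h x = 0) : ∫ x in (-B)..B, h x = ∫ x in (-X)..X, h x := by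
  have key : ∀ Y, X ≤ Y → ∫ x in (-Y)..Y, h x = ∫ x, h x := by
    intro Y hY
    rw [intervalIntegral.integral_of_le (by linarith), ← integral_Icc_eq_integral_Ioc]
    refine setIntegral_eq_integral_of_forall_compl_eq_zero fun x hx => h0 x ?_
    by_contra hc
    push Not at hc
    exact hx ⟨by linarith [(abs_le.1 hc).1], by linarith [(abs_le.1 hc).2]⟩
  rw [key B hXB, key X le_rfl]

lemma bu_supp_integral' {h : ℝ → ℝ} {X : ℝ} (hX : 0 ≤ X)
    (h0 : ∀ x, X < |x| → h x = 0) : ∫ x in (-X)..X, h x = ∫ x, h x := by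
  rw [intervalIntegral.integral_of_le (by linarith), ← integral_Icc_eq_integral_Ioc]
  refine setIntegral_eq_integral_of_forall_compl_eq_zero fun x hx => h0 x ?_
  by_contra hc
  push Not at hc
  exact hx ⟨by linarith [(abs_le.1 hc).1], by linarith [(abs_le.1 hc).2]⟩

/-- Mean value estimate in time. -/
lemma bu_time_lip {f : ℝ × ℝ → ℝ} (hc : ContinuousOn f {p : ℝ × ℝ | 0 ≤ p.1})
    (hf : ContDiffOn ℝ 1 f {p : ℝ × ℝ | 0 < p.1}) {C t0 t : ℝ} (h0 : 0 ≤ t0) (h1 : t0 ≤ t)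
    (x : ℝ) (hC : ∀ s, 0 < s → s ≤ t → |deriv (fun r => f (r, x)) s| ≤ C) :
    |f (t, x) - f (t0, x)| ≤ C * (t - t0) := by
  rcases h1.eq_or_lt with rfl | h1
  · simp
  have hcont : ContinuousOn (fun s => f (s, x)) (Set.Icc t0 t) := by
    refine hc.comp (f := fun s : ℝ => (s, x)) (by fun_prop) ?_
    intro s hs; exact h0.trans hs.1
  obtain ⟨c, hc1, hc2⟩ := exists_deriv_eq_slope (fun s => f (s, x)) h1 hcont (fun s hs =>
    (bu_hasDerivAt_t hf (lt_of_le_of_lt h0 hs.1) x).differentiableAt.differentiableWithinAt)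
  have h3 := hC c (lt_of_le_of_lt h0 hc1.1) hc1.2.le
  have h4 : f (t, x) - f (t0, x) = deriv (fun r => f (r, x)) c * (t - t0) := by
    rw [hc2]; field_simp [(sub_pos.2 h1).ne']
  rw [h4, abs_mul, abs_of_pos (sub_pos.2 h1)]
  exact mul_le_mul_of_nonneg_right h3 (sub_pos.2 h1).le


structure BuSol (γ τ : ℝ) (ρ u S : ℝ × ℝ → ℝ) : Prop where
  hγ : 1 < γ
  hτ : 0 < τ
  cρ : ContinuousOn ρ {p : ℝ × ℝ | 0 ≤ p.1}
  cu : ContinuousOn u {p : ℝ × ℝ | 0 ≤ p.1}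
  cS : ContinuousOn S {p : ℝ × ℝ | 0 ≤ p.1}
  dρ : ContDiffOn ℝ 1 ρ {p : ℝ × ℝ | 0 < p.1}
  du : ContDiffOn ℝ 1 u {p : ℝ × ℝ | 0 < p.1}
  dS : ContDiffOn ℝ 1 S {p : ℝ × ℝ | 0 < p.1}
  pos : ∀ p : ℝ × ℝ, 0 ≤ p.1 → 0 < ρ p
  mass : ∀ t : ℝ, 0 < t → ∀ x : ℝ,
    deriv (fun s => ρ (s, x)) t + deriv (fun y => ρ (t, y) * u (t, y)) x = 0
  mom : ∀ t : ℝ, 0 < t → ∀ x : ℝ,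
    ρ (t, x) * deriv (fun s => u (s, x)) t + ρ (t, x) * u (t, x) * deriv (fun y => u (t, y)) x
      + deriv (fun y => ρ (t, y) ^ γ) x = deriv (fun y => S (t, y)) x
  relax : ∀ t : ℝ, 0 < t → ∀ x : ℝ,
    τ * ρ (t, x) * (deriv (fun s => S (s, x)) t + u (t, x) * deriv (fun y => S (t, y)) x)
      - deriv (fun y => u (t, y)) x = - S (t, x)
  bdd : ∀ t : ℝ, 0 ≤ t → ∃ C : ℝ, ∀ s : ℝ, 0 < s → s ≤ t → ∀ x : ℝ,
    |deriv (fun r => ρ (r, x)) s| ≤ C ∧ |deriv (fun r => u (r, x)) s| ≤ C ∧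
    |deriv (fun r => S (r, x)) s| ≤ C

/-- internal energy -/
noncomputable def buG (γ r : ℝ) : ℝ := (r ^ γ - 1 - γ * (r - 1)) / (γ - 1)

/-- energy of a state -/
noncomputable def buE (γ τ r v s : ℝ) : ℝ := r * v ^ 2 / 2 + buG γ r + τ * r * s ^ 2 / 2

/-- energy flux of a state -/
noncomputable def buF (γ τ r v s : ℝ) : ℝ := v * (buE γ τ r v s + (r ^ γ - 1) - s)

lemma buG_nonneg {γ r : ℝ} (hγ : 1 < γ) (hr : 0 < r) : 0 ≤ buG γ r := by
  have := one_add_mul_self_le_rpow_one_add (s := r - 1) (by linarith) hγ.le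
  rw [add_sub_cancel] at this
  exact div_nonneg (by linarith) (by linarith)

lemma buG_eq_zero {γ r : ℝ} (hγ : 1 < γ) (hr : 0 < r) (h : buG γ r = 0) : r = 1 := by
  by_contra hne
  have := one_add_mul_self_lt_rpow_one_add (s := r - 1) (by linarith) (sub_ne_zero.2 hne) hγ
  rw [add_sub_cancel] at this
  have : 0 < buG γ r := div_pos (by linarith) (by linarith)
  linarith

lemma buE_nonneg {γ τ r v s : ℝ} (hγ : 1 < γ) (hτ : 0 < τ) (hr : 0 < r) : 0 ≤ buE γ τ r v s := by
  have := buG_nonneg hγ hr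
  unfold buE; positivity

lemma buE_eq_zero {γ τ r v s : ℝ} (hγ : 1 < γ) (hτ : 0 < τ) (hr : 0 < r)
    (h : buE γ τ r v s = 0) : r = 1 ∧ v = 0 ∧ s = 0 := by
  have h1 := buG_nonneg hγ hr
  have h2 : 0 ≤ r * v ^ 2 / 2 := by positivity
  have h3 : 0 ≤ τ * r * s ^ 2 / 2 := by positivity
  unfold buE at h
  have h4 : r * v ^ 2 / 2 = 0 := by linarith
  have h5 : τ * r * s ^ 2 / 2 = 0 := by linarith
  refine ⟨buG_eq_zero hγ hr (by linarith), ?_, ?_⟩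
  · simpa [hr.ne'] using h4
  · simpa [hr.ne', hτ.ne'] using h5

lemma buE_ref (γ τ : ℝ) : buE γ τ 1 0 0 = 0 := by simp [buE, buG]

namespace BuSol
variable {γ τ : ℝ} {ρ u S : ℝ × ℝ → ℝ}

/-- The partial derivatives with the equations. -/
lemma derivs (h : BuSol γ τ ρ u S) {t : ℝ} (ht : 0 < t) (x : ℝ) :
    ∃ rt rx vt vx st sx : ℝ,
      HasDerivAt (fun s => ρ (s, x)) rt t ∧ HasDerivAt (fun y => ρ (t, y)) rx x ∧
      HasDerivAt (fun s => u (s, x)) vt t ∧ HasDerivAt (fun y => u (t, y)) vx x ∧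
      HasDerivAt (fun s => S (s, x)) st t ∧ HasDerivAt (fun y => S (t, y)) sx x ∧
      rt + (rx * u (t, x) + ρ (t, x) * vx) = 0 ∧
      ρ (t, x) * vt + ρ (t, x) * u (t, x) * vx + γ * ρ (t, x) ^ (γ - 1) * rx = sx ∧
      τ * ρ (t, x) * (st + u (t, x) * sx) - vx = - S (t, x) := by
  have a1 := bu_hasDerivAt_t h.dρ ht x
  have a2 := bu_hasDerivAt_x h.dρ ht x
  have a3 := bu_hasDerivAt_t h.du ht x
  have a4 := bu_hasDerivAt_x h.du ht x
  have a5 := bu_hasDerivAt_t h.dS ht x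
  have a6 := bu_hasDerivAt_x h.dS ht x
  have hp := h.pos (t, x) ht.le
  refine ⟨_, _, _, _, _, _, a1, a2, a3, a4, a5, a6, ?_, ?_, ?_⟩
  · have := h.mass t ht x
    have h2 : deriv (fun y => ρ (t, y) * u (t, y)) x = _ := (a2.mul a4).deriv
    rw [a1.deriv, h2] at this
    linarith
  · have := h.mom t ht x
    rw [a3.deriv, a4.deriv, a6.deriv, (a2.rpow_const (p := γ) (Or.inl hp.ne')).deriv] at this
    linarith
  · have := h.relax t ht x
    rw [a5.deriv, a4.deriv, a6.deriv] at this
    linarith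

lemma cpow (h : BuSol γ τ ρ u S) : ContinuousOn (fun p => ρ p ^ γ) {p : ℝ × ℝ | 0 ≤ p.1} :=
  h.cρ.rpow_const fun p hp => Or.inl (h.pos p hp).ne'

lemma dpow (h : BuSol γ τ ρ u S) : ContDiffOn ℝ 1 (fun p => ρ p ^ γ) {p : ℝ × ℝ | 0 < p.1} :=
  h.dρ.rpow_const_of_ne fun p hp => (h.pos p (le_of_lt hp)).ne'

lemma cE (h : BuSol γ τ ρ u S) :
    ContinuousOn (fun p => buE γ τ (ρ p) (u p) (S p)) {p : ℝ × ℝ | 0 ≤ p.1} := by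
  unfold buE buG
  have h1 := h.cρ
  have h2 := h.cu
  have h3 := h.cS
  have h4 := h.cpow
  have h5 : γ - 1 ≠ 0 := by linarith [h.hγ]
  fun_prop (disch := assumption)

lemma dE (h : BuSol γ τ ρ u S) :
    ContDiffOn ℝ 1 (fun p => buE γ τ (ρ p) (u p) (S p)) {p : ℝ × ℝ | 0 < p.1} := by
  unfold buE buG
  have h1 := h.dρ
  have h2 := h.du
  have h3 := h.dS
  have h4 := h.dpow
  have h5 : γ - 1 ≠ 0 := by linarith [h.hγ]
  fun_prop (disch := assumption)

lemma dF (h : BuSol γ τ ρ u S) :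
    ContDiffOn ℝ 1 (fun p => buF γ τ (ρ p) (u p) (S p)) {p : ℝ × ℝ | 0 < p.1} := by
  unfold buF
  have h2 := h.du
  have h3 := h.dS
  have h4 := h.dpow
  have h5 := h.dE
  fun_prop (disch := assumption)

/-- Energy identity with a weight. -/
lemma energy (h : BuSol γ τ ρ u S) {t : ℝ} (ht : 0 < t) (x : ℝ) :
    ∃ et fx : ℝ, HasDerivAt (fun s => buE γ τ (ρ (s, x)) (u (s, x)) (S (s, x))) et t ∧
      HasDerivAt (fun y => buF γ τ (ρ (t, y)) (u (t, y)) (S (t, y))) fx x ∧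
      et + fx = - S (t, x) ^ 2 := by
  obtain ⟨rt, rx, vt, vx, st, sx, a1, a2, a3, a4, a5, a6, m1, m2, m3⟩ := h.derivs ht x
  have hp := h.pos (t, x) ht.le
  have hE : ∀ {f g k : ℝ → ℝ} {f' g' k' z : ℝ}, HasDerivAt f f' z → HasDerivAt g g' z →
      HasDerivAt k k' z → f z ≠ 0 → HasDerivAt (fun s => buE γ τ (f s) (g s) (k s))
        (f' * g z ^ 2 / 2 + f z * g z * g' + γ * (f z ^ (γ - 1) - 1) / (γ - 1) * f'
          + τ * (f' * k z ^ 2 / 2 + f z * k z * k')) z := by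
    intro f g k f' g' k' z hf hg hk hz
    have b1 := ((hf.mul (hg.pow 2)).div_const 2).add
      ((((hf.rpow_const (p := γ) (Or.inl hz)).sub_const 1).sub
        ((hf.sub_const 1).const_mul γ)).div_const (γ - 1))
    have b2 := b1.add (((hf.const_mul τ).mul (hk.pow 2)).div_const 2)
    refine (b2.congr_deriv ?_)
    simp only [Nat.cast_ofNat, Pi.pow_apply]
    ring
  have e1 := hE a1 a3 a5 hp.ne'
  have e2 := hE a2 a4 a6 hp.ne'
  have f1 := a4.mul ((e2.add ((a2.rpow_const (p := γ) (Or.inl hp.ne')).sub_const 1)).sub a6)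
  refine ⟨_, _, e1, f1, ?_⟩
  have hq : ρ (t, x) ^ γ = ρ (t, x) * ρ (t, x) ^ (γ - 1) := by
    rw [Real.rpow_sub_one hp.ne']; field_simp
  simp only [Pi.add_apply, Pi.sub_apply, buE, buG]
  rw [hq]
  generalize ρ (t, x) ^ (γ - 1) = q at *
  have h5 : γ - 1 ≠ 0 := by linarith [h.hγ]
  have hk : (γ - 1) * (γ - 1)⁻¹ = 1 := mul_inv_cancel₀ h5
  linear_combination (u (t,x) ^ 2 / 2 + γ * (q - 1) / (γ - 1) + τ * S (t,x) ^ 2 / 2) * m1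
    + u (t,x) * m2 + S (t,x) * m3 + vx * (1 - ρ (t, x) * q) * hk

end BuSol


/-- Quadratic lower bound for the internal energy near the reference density. -/
lemma buG_lower {γ η : ℝ} (hγ : 1 < γ) (hη : 0 < η) :
    ∀ᶠ r in nhds (1 : ℝ), (γ / 2 - η) * (r - 1) ^ 2 ≤ buG γ r := by
  set φ : ℝ → ℝ := fun r => buG γ r - (γ / 2 - η) * (r - 1) ^ 2 with hφ
  have hd : ∀ r : ℝ, 0 < r → HasDerivAt φ
      (γ * (r ^ (γ - 1) - 1) / (γ - 1) - (γ - 2 * η) * (r - 1)) r := by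
    intro r hr
    have hid := hasDerivAt_id r
    have b1 := ((((hid.rpow_const (p := γ) (Or.inl hr.ne')).sub_const 1).sub
        ((hid.sub_const 1).const_mul γ)).div_const (γ - 1)).sub
        (((hid.sub_const 1).pow 2).const_mul (γ / 2 - η))
    refine b1.congr_deriv ?_
    simp only [Nat.cast_ofNat, id]
    ring
  have hdd : HasDerivAt (deriv φ) (2 * η) 1 := by
    have hev : deriv φ =ᶠ[nhds 1]
        fun r => (γ * (r ^ (γ - 1) - 1) / (γ - 1) - (γ - 2 * η) * (r - 1)) := by
      filter_upwards [lt_mem_nhds (zero_lt_one (α := ℝ))] with r hr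
      exact (hd r hr).deriv
    refine HasDerivAt.congr_of_eventuallyEq ?_ hev
    have hid := hasDerivAt_id (1 : ℝ)
    have b1 := (((((hid.rpow_const (p := γ - 1) (Or.inl one_ne_zero)).sub_const 1).const_mul
        γ).div_const (γ - 1))).sub ((hid.sub_const 1).const_mul (γ - 2 * η))
    refine b1.congr_deriv ?_
    have h5 : γ - 1 ≠ 0 := by linarith
    simp only [id, Real.one_rpow]
    field_simp
    ring
  have hmin : IsLocalMin φ 1 := by
    refine isLocalMin_of_deriv_deriv_pos (by rw [hdd.deriv]; linarith) ?_
      (hd 1 one_pos).continuousAt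
    rw [(hd 1 one_pos).deriv]; simp
  filter_upwards [hmin] with r hr
  have : φ 1 = 0 := by simp [hφ, buG]
  rw [this] at hr
  simp only [hφ] at hr
  linarith

lemma bu_pow_upper {γ η : ℝ} (hη : 0 < η) :
    ∀ᶠ r in nhds (1 : ℝ), |r ^ γ - 1 - γ * (r - 1)| ≤ η * |r - 1| := by
  have h1 : HasDerivAt (fun r : ℝ => r ^ γ) γ 1 := by
    have := (hasDerivAt_id (1:ℝ)).rpow_const (p := γ) (Or.inl one_ne_zero)
    simpa using this
  have := h1.isLittleO.def hη
  filter_upwards [this] with r hr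
  simp only [Real.one_rpow, smul_eq_mul, Real.norm_eq_abs] at hr
  rwa [mul_comm (r - 1) γ] at hr

set_option maxHeartbeats 1000000 in
/-- Flux controlled by energy close to the reference state. -/
lemma bu_flux {γ τ c : ℝ} (hγ : 1 < γ) (hτ : 0 < τ) (hc : 0 < c) (hcσ : γ + 1 / τ < c ^ 2) :
    ∃ η > 0, ∀ r v s : ℝ, |r - 1| ≤ η → |v| ≤ η → |s| ≤ η →
      |buF γ τ r v s| ≤ c * buE γ τ r v s := by
  have hT : Filter.Tendsto (fun η : ℝ => (c - η) ^ 2 * (1 - η) -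
      ((γ + η) ^ 2 / (γ - 2 * η) + 1 / (τ * (1 - η)))) (nhds 0)
      (nhds ((c - 0) ^ 2 * (1 - 0) - ((γ + 0) ^ 2 / (γ - 2 * 0) + 1 / (τ * (1 - 0))))) := by
    have e1 : γ - 2 * 0 ≠ 0 := by linarith
    have e2 : τ * (1 - 0) ≠ 0 := by linarith
    refine ContinuousAt.tendsto (f := fun η : ℝ => (c - η) ^ 2 * (1 - η) -
      ((γ + η) ^ 2 / (γ - 2 * η) + 1 / (τ * (1 - η)))) ?_
    fun_prop (disch := assumption)
  have hpos : (0:ℝ) < ((c - 0) ^ 2 * (1 - 0) - ((γ + 0) ^ 2 / (γ - 2 * 0) + 1 / (τ * (1 - 0)))) := by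
    have : (γ + 0) ^ 2 / (γ - 2 * 0) = γ := by
      have : γ ≠ 0 := by linarith
      simp only [add_zero, mul_zero, sub_zero]; field_simp
    rw [this]; simp only [sub_zero, mul_one]; linarith
  have hev := hT.eventually (lt_mem_nhds hpos)
  obtain ⟨ε, hε, hball⟩ := Metric.eventually_nhds_iff.1 hev
  obtain ⟨η, hη0, hη1, hη2, hη3, hη4⟩ : ∃ η > 0, η < ε ∧ η < c ∧ η < 1 / 2 ∧ 2 * η < γ := by
    refine ⟨min (min ε c) (1/2) / 2, by positivity, ?_, ?_, ?_, ?_⟩ <;>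
    · have h1 := min_le_left (min ε c) (1/2)
      have h2 := min_le_right (min ε c) (1/2)
      have h3 := min_le_left ε c
      have h4 := min_le_right ε c
      linarith
  have hq := hball (y := η) (by rw [Real.dist_eq, sub_zero, abs_of_pos hη0]; exact hη1)
  obtain ⟨ε1, hε1, hb1⟩ := Metric.eventually_nhds_iff.1 ((buG_lower hγ hη0).and (bu_pow_upper (γ := γ) hη0))
  refine ⟨min η (ε1 / 2), by positivity, fun r v s hr hv hs => ?_⟩
  have hr1 := hr.trans (min_le_left _ _)
  have hr2 := hr.trans (min_le_right _ _)
  replace hv := hv.trans (min_le_left _ _)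
  obtain ⟨hG, hP⟩ := hb1 (y := r) (by rw [Real.dist_eq]; linarith)
  have hr3 : 1 - η ≤ r := by linarith [(abs_le.1 hr1).1]
  -- energy lower bound
  set a := |r - 1| with ha
  set b := |v| with hb
  set d := |s| with hd
  have ha0 : 0 ≤ a := abs_nonneg _
  have hb0 : 0 ≤ b := abs_nonneg _
  have hd0 : 0 ≤ d := abs_nonneg _
  have hE : ((1 - η) * b ^ 2 + (γ - 2 * η) * a ^ 2 + τ * (1 - η) * d ^ 2) / 2 ≤ buE γ τ r v s := by
    have e1 : (1 - η) * v ^ 2 ≤ r * v ^ 2 := mul_le_mul_of_nonneg_right hr3 (sq_nonneg _)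
    have e2 : τ * ((1 - η) * s ^ 2) ≤ τ * (r * s ^ 2) :=
      mul_le_mul_of_nonneg_left (mul_le_mul_of_nonneg_right hr3 (sq_nonneg _)) hτ.le
    rw [ha, hb, hd, sq_abs, sq_abs, sq_abs]
    unfold buE
    linarith
  have hEn : 0 ≤ buE γ τ r v s := buE_nonneg hγ hτ (by linarith)
  have hlin : |(r ^ γ - 1) - s| ≤ (γ + η) * a + d := by
    have e1 : (r ^ γ - 1) - s = (r ^ γ - 1 - γ * (r - 1)) + γ * (r - 1) - s := by ring
    rw [e1]
    refine (abs_sub _ _).trans ?_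
    refine (add_le_add_left (abs_add_le _ _) _).trans ?_
    rw [abs_mul γ, abs_of_pos (by linarith : 0 < γ)]
    linarith
  have hF : |buF γ τ r v s| ≤ b * buE γ τ r v s + b * ((γ + η) * a + d) := by
    have e1 : buF γ τ r v s = v * buE γ τ r v s + v * ((r ^ γ - 1) - s) := by unfold buF; ring
    rw [e1]
    refine (abs_add_le _ _).trans ?_
    rw [abs_mul, abs_mul, abs_of_nonneg hEn]
    exact add_le_add le_rfl (mul_le_mul_of_nonneg_left hlin hb0)
  -- quadratic form
  have hA : 0 < γ - 2 * η := by linarith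
  have hB : 0 < τ * (1 - η) := mul_pos hτ (by linarith)
  have hcs : ((γ + η) * a + d) ^ 2 ≤ ((γ + η) ^ 2 / (γ - 2 * η) + 1 / (τ * (1 - η))) *
      ((γ - 2 * η) * a ^ 2 + τ * (1 - η) * d ^ 2) := by
    have e : ((γ + η) ^ 2 / (γ - 2 * η) + 1 / (τ * (1 - η))) *
      ((γ - 2 * η) * a ^ 2 + τ * (1 - η) * d ^ 2) - ((γ + η) * a + d) ^ 2 =
      ((γ + η) * (τ * (1 - η)) * d - (γ - 2 * η) * a) ^ 2 / ((γ - 2 * η) * (τ * (1 - η))) := by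
      generalize γ - 2 * η = A at *
      generalize τ * (1 - η) = B at *
      field_simp
      ring
    have : 0 ≤ ((γ + η) * (τ * (1 - η)) * d - (γ - 2 * η) * a) ^ 2 / ((γ - 2 * η) * (τ * (1 - η))) := by
      positivity
    linarith
  set Q := (γ - 2 * η) * a ^ 2 + τ * (1 - η) * d ^ 2 with hQ
  have hQ0 : 0 ≤ Q := by positivity
  have hcs2 : ((γ + η) * a + d) ^ 2 ≤ (c - η) ^ 2 * (1 - η) * Q :=
    hcs.trans (mul_le_mul_of_nonneg_right (by linarith) hQ0)
  set z := (γ + η) * a + d with hz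
  have hfin : b * z ≤ (c - η) * (((1 - η) * b ^ 2 + Q) / 2) := by
    have hk : 0 ≤ (c - η) * (((1 - η) * b ^ 2 + Q) / 2) := by
      have : 0 ≤ 1 - η := by linarith
      have : 0 ≤ c - η := by linarith
      positivity
    refine abs_le_of_sq_le_sq' ?_ hk |>.2
    have e1 : (b * z) ^ 2 ≤ b ^ 2 * ((c - η) ^ 2 * (1 - η) * Q) := by
      rw [mul_pow]; exact mul_le_mul_of_nonneg_left hcs2 (sq_nonneg _)
    have e2 : b ^ 2 * ((c - η) ^ 2 * (1 - η) * Q) ≤ ((c - η) * (((1 - η) * b ^ 2 + Q) / 2)) ^ 2 := by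
      have e3 : ((c - η) * (((1 - η) * b ^ 2 + Q) / 2)) ^ 2 - b ^ 2 * ((c - η) ^ 2 * (1 - η) * Q)
        = ((c - η) * (((1 - η) * b ^ 2 - Q) / 2)) ^ 2 := by ring
      linarith only [e3, sq_nonneg ((c - η) * (((1 - η) * b ^ 2 - Q) / 2))]
    exact e1.trans e2
  have hE2 : (c - η) * (((1 - η) * b ^ 2 + Q) / 2) ≤ (c - η) * buE γ τ r v s :=
    mul_le_mul_of_nonneg_left (by rw [hQ]; linarith) (by linarith)
  have hbE : b * buE γ τ r v s ≤ η * buE γ τ r v s := mul_le_mul_of_nonneg_right hv hEn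
  linarith


lemma bu_glue_deriv_nonneg (y : ℝ) : 0 ≤ deriv expNegInvGlue y :=
  expNegInvGlue.monotone.deriv_nonneg

lemma bu_glue_deriv_zero {y : ℝ} (hy : y ≤ 0) : deriv expNegInvGlue y = 0 := by
  have : IsLocalMin expNegInvGlue y := by
    refine Filter.Eventually.of_forall fun z => ?_
    rw [expNegInvGlue.zero_of_nonpos hy]
    exact expNegInvGlue.nonneg z
  exact this.deriv_eq_zero

lemma bu_glue_hasDerivAt (y : ℝ) : HasDerivAt expNegInvGlue (deriv expNegInvGlue y) y :=
  ((expNegInvGlue.contDiff (n := 1)).differentiable (by norm_num) y).hasDerivAt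

/-- Reference state. -/
def BuRef (ρ u S : ℝ × ℝ → ℝ) (p : ℝ × ℝ) : Prop := ρ p = 1 ∧ u p = 0 ∧ S p = 0

namespace BuSol
variable {γ τ : ℝ} {ρ u S : ℝ × ℝ → ℝ}

/-- One step of the propagation estimate. -/
lemma step (h : BuSol γ τ ρ u S) {c η A B t0 t1 : ℝ}
    (hflux : ∀ r v s : ℝ, |r - 1| ≤ η → |v| ≤ η → |s| ≤ η →
      |buF γ τ r v s| ≤ c * buE γ τ r v s) (hc : 0 < c)
    (h0 : 0 ≤ t0) (h01 : t0 ≤ t1)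
    (hnear : ∀ t, t0 ≤ t → t ≤ t1 → ∀ x, A < x → x < B →
      |ρ (t, x) - 1| ≤ η ∧ |u (t, x)| ≤ η ∧ |S (t, x)| ≤ η)
    (href : ∀ x, A < x → x < B → BuRef ρ u S (t0, x))
    (t : ℝ) (ht0 : t0 ≤ t) (ht1 : t ≤ t1) (x : ℝ) (hx1 : A + c * (t - t0) < x)
    (hx2 : x < B - c * (t - t0)) : BuRef ρ u S (t, x) := by
  have hcs : 0 ≤ c * (t - t0) := mul_nonneg hc.le (by linarith)
  have hAB : A < B := by linarith
  set g := expNegInvGlue with hg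
  set g' := deriv expNegInvGlue with hg'
  set w : ℝ × ℝ → ℝ := fun p => g (p.2 - A - c * (p.1 - t0)) * g (B - c * (p.1 - t0) - p.2) with hw
  have hgc : ContDiff ℝ 1 g := expNegInvGlue.contDiff
  have hgcont : Continuous g := hgc.continuous
  have hwd : ContDiff ℝ 1 w := by rw [hw]; fun_prop
  have hwc : Continuous w := hwd.continuous
  set E : ℝ × ℝ → ℝ := fun p => buE γ τ (ρ p) (u p) (S p) with hE
  set Fl : ℝ × ℝ → ℝ := fun p => buF γ τ (ρ p) (u p) (S p) with hFl
  have hEnn : ∀ p : ℝ × ℝ, 0 ≤ p.1 → 0 ≤ E p := fun p hp => buE_nonneg h.hγ h.hτ (h.pos p hp)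
  have hwnn : ∀ p, 0 ≤ w p := fun p => mul_nonneg (expNegInvGlue.nonneg _) (expNegInvGlue.nonneg _)
  set dis : ℝ × ℝ → ℝ := fun p =>
    g' (p.2 - A - c * (p.1 - t0)) * g (B - c * (p.1 - t0) - p.2) * (Fl p - c * E p)
    + g (p.2 - A - c * (p.1 - t0)) * g' (B - c * (p.1 - t0) - p.2) * (- Fl p - c * E p)
    - w p * S p ^ 2 with hdis
  have hbal : ∀ s : ℝ, 0 < s → ∀ y : ℝ, deriv (fun r => w (r, y) * E (r, y)) s
      + deriv (fun z => w (s, z) * Fl (s, z)) y = dis (s, y) := by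
    intro s hs y
    obtain ⟨et, fx, e1, e2, e3⟩ := h.energy hs y
    have i1 : HasDerivAt (fun r : ℝ => y - A - c * (r - t0)) (-c) s := by
      have := (((hasDerivAt_id s).sub_const t0).const_mul c).const_sub (y - A)
      simpa using this
    have i2 : HasDerivAt (fun r : ℝ => B - c * (r - t0) - y) (-c) s := by
      have := ((((hasDerivAt_id s).sub_const t0).const_mul c).const_sub B).sub_const y
      simpa using this
    have i3 : HasDerivAt (fun z : ℝ => z - A - c * (s - t0)) 1 y := by
      simpa using ((hasDerivAt_id y).sub_const A).sub_const (c * (s - t0))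
    have i4 : HasDerivAt (fun z : ℝ => B - c * (s - t0) - z) (-1) y := by
      simpa using (hasDerivAt_id y).const_sub (B - c * (s - t0))
    have w1 := ((bu_glue_hasDerivAt _).comp s i1).mul ((bu_glue_hasDerivAt _).comp s i2)
    have w2 := ((bu_glue_hasDerivAt _).comp y i3).mul ((bu_glue_hasDerivAt _).comp y i4)
    have k1 : deriv (fun r => w (r, y) * E (r, y)) s = _ := (w1.mul e1).deriv
    have k2 : deriv (fun z => w (s, z) * Fl (s, z)) y = _ := (w2.mul e2).deriv
    rw [k1, k2]
    simp only [hdis, hw, hE, hFl, Pi.mul_apply, Function.comp]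
    linear_combination (g (y - A - c * (s - t0)) * g (B - c * (s - t0) - y)) * e3
  have hdE : ContDiffOn ℝ 1 (fun p => w p * E p) {p : ℝ × ℝ | 0 < p.1} :=
    hwd.contDiffOn.mul h.dE
  have hdF : ContDiffOn ℝ 1 (fun p => w p * Fl p) {p : ℝ × ℝ | 0 < p.1} :=
    hwd.contDiffOn.mul h.dF
  have hcE : ContinuousOn (fun p => w p * E p) {p : ℝ × ℝ | 0 ≤ p.1} :=
    hwc.continuousOn.mul h.cE
  have hder := fun s (hs : 0 < s) => bu_balance (e := fun p => w p * E p) (f := fun p => w p * Fl p)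
    (g := dis) hdE hdF hbal A B hs
  have hdisnp : ∀ s, t0 < s → s < t1 → ∀ y, dis (s, y) ≤ 0 := by
    intro s hs1 hs2 y
    have hws := mul_nonneg (hwnn (s, y)) (sq_nonneg (S (s, y)))
    simp only [hdis]
    by_cases hy1 : y - A - c * (s - t0) ≤ 0
    · rw [hg', bu_glue_deriv_zero hy1, hg, expNegInvGlue.zero_of_nonpos hy1]; simp only [zero_mul]
      linarith
    by_cases hy2 : B - c * (s - t0) - y ≤ 0
    · rw [hg', bu_glue_deriv_zero hy2, hg, expNegInvGlue.zero_of_nonpos hy2]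
      simp only [zero_mul, mul_zero]
      linarith
    push Not at hy1 hy2
    have hcs' : 0 ≤ c * (s - t0) := mul_nonneg hc.le (by linarith)
    obtain ⟨n1, n2, n3⟩ := hnear s hs1.le hs2.le y (by linarith) (by linarith)
    have hfl := abs_le.1 (hflux _ _ _ n1 n2 n3)
    have q1 : g' (y - A - c * (s - t0)) * g (B - c * (s - t0) - y) * (Fl (s, y) - c * E (s, y)) ≤ 0 :=
      mul_nonpos_of_nonneg_of_nonpos
        (mul_nonneg (bu_glue_deriv_nonneg _) (expNegInvGlue.nonneg _))
        (by simp only [hFl, hE]; linarith [hfl.2])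
    have q2 : g (y - A - c * (s - t0)) * g' (B - c * (s - t0) - y) * (- Fl (s, y) - c * E (s, y)) ≤ 0 :=
      mul_nonpos_of_nonneg_of_nonpos
        (mul_nonneg (expNegInvGlue.nonneg _) (bu_glue_deriv_nonneg _))
        (by simp only [hFl, hE]; linarith [hfl.1])
    linarith
  have hanti : AntitoneOn (fun s => ∫ y in A..B, w (s, y) * E (s, y)) (Set.Icc t0 t1) := by
    refine antitoneOn_of_deriv_nonpos (convex_Icc _ _)
      ((bu_cont_integral hcE A B).mono fun s hs => h0.trans hs.1) ?_ ?_
    · intro s hs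
      rw [interior_Icc] at hs
      exact (hder s (lt_of_le_of_lt h0 hs.1)).differentiableAt.differentiableWithinAt
    · intro s hs
      rw [interior_Icc] at hs
      rw [(hder s (lt_of_le_of_lt h0 hs.1)).deriv]
      have hcs' : 0 ≤ c * (s - t0) := mul_nonneg hc.le (by linarith [hs.1])
      have z1 : w (s, B) = 0 := by
        simp only [hw, hg]
        rw [expNegInvGlue.zero_of_nonpos (x := B - c * (s - t0) - B) (by linarith), mul_zero]
      have z2 : w (s, A) = 0 := by
        simp only [hw, hg]
        rw [expNegInvGlue.zero_of_nonpos (x := A - A - c * (s - t0)) (by linarith), zero_mul]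
      simp only [z1, z2, zero_mul, sub_zero]
      have := intervalIntegral.integral_nonneg (f := fun y => - dis (s, y)) (μ := volume) hAB.le
        (fun y _ => by have := hdisnp s hs.1 hs.2 y; linarith)
      rw [intervalIntegral.integral_neg] at this
      linarith
  have hzero : ∫ y in A..B, w (t0, y) * E (t0, y) = 0 := by
    rw [intervalIntegral.integral_of_le hAB.le, integral_Ioc_eq_integral_Ioo]
    refine (setIntegral_congr_fun measurableSet_Ioo (g := fun _ => (0:ℝ)) fun y hy => ?_).trans (by simp)
    obtain ⟨r1, r2, r3⟩ := href y hy.1 hy.2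
    simp only [hE, r1, r2, r3, buE_ref, mul_zero]
  have hle := hanti ⟨le_rfl, h01⟩ ⟨ht0, ht1⟩ ht0
  simp only [hzero] at hle
  have htn : 0 ≤ t := h0.trans ht0
  by_contra hne
  have hEpos : 0 < E (t, x) := by
    refine lt_of_le_of_ne (hEnn (t, x) htn) fun hz => hne ?_
    exact buE_eq_zero h.hγ h.hτ (h.pos (t, x) htn) hz.symm
  have hwpos : 0 < w (t, x) :=
    mul_pos (expNegInvGlue.pos_of_pos (by simp only; linarith))
      (expNegInvGlue.pos_of_pos (by simp only; linarith))
  have := intervalIntegral.integral_pos (f := fun y => w (t, y) * E (t, y)) hAB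
    ((bu_cont_slice hcE (fun _ => htn)).continuousOn)
    (fun y _ => mul_nonneg (hwnn _) (hEnn (t, y) htn))
    ⟨x, ⟨by linarith, by linarith⟩, mul_pos hwpos hEpos⟩
  linarith

/-- Finite propagation speed. -/
lemma propagation (h : BuSol γ τ ρ u S) {c A B : ℝ} (hc : 0 < c) (hcσ : γ + 1 / τ < c ^ 2)
    (href : ∀ x, A < x → x < B → BuRef ρ u S (0, x)) (t : ℝ) (ht : 0 ≤ t) (x : ℝ)
    (hx1 : A + c * t < x) (hx2 : x < B - c * t) : BuRef ρ u S (t, x) := by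
  obtain ⟨η, hη, hflux⟩ := bu_flux h.hγ h.hτ hc hcσ
  obtain ⟨C, hC⟩ := h.bdd t ht
  obtain ⟨δ, hδ, hCδ⟩ : ∃ δ > 0, C * δ ≤ η ∧ |C| * δ ≤ η := by
    have : |C| * (η / (|C| + 1)) ≤ η := by
      rw [mul_div_assoc', div_le_iff₀ (by positivity)]
      nlinarith [abs_nonneg C]
    refine ⟨η / (|C| + 1), by positivity, ?_, this⟩
    exact (mul_le_mul_of_nonneg_right (le_abs_self C) (by positivity)).trans this
  have key : ∀ n : ℕ, ∀ s, 0 ≤ s → s ≤ t → s ≤ n * δ → ∀ y, A + c * s < y → y < B - c * s →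
      BuRef ρ u S (s, y) := by
    intro n
    induction n with
    | zero =>
      intro s hs _ hs2 y hy1 hy2
      have : s = 0 := le_antisymm (by simpa using hs2) hs
      subst this
      exact href y (by linarith) (by linarith)
    | succ n ih =>
      intro s hs hst hs2 y hy1 hy2
      by_cases hsn : s ≤ n * δ
      · exact ih s hs hst hsn y hy1 hy2
      push Not at hsn
      push_cast at hs2
      set t0 := n * δ with ht0
      have h0 : 0 ≤ t0 := by positivity
      have href' : ∀ y, A + c * t0 < y → y < B - c * t0 → BuRef ρ u S (t0, y) :=
        ih t0 h0 (by linarith) le_rfl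
      refine h.step (A := A + c * t0) (B := B - c * t0) (t1 := s) hflux hc h0 hsn.le ?_ href' s
        hsn.le le_rfl y (by linarith) (by linarith)
      intro r hr1 hr2 z hz1 hz2
      obtain ⟨q1, q2, q3⟩ := href' z hz1 hz2
      have hb : C * (r - t0) ≤ η := by
        have : |C| * (r - t0) ≤ |C| * δ :=
          mul_le_mul_of_nonneg_left (by linarith) (abs_nonneg C)
        have h2 : C * (r - t0) ≤ |C| * (r - t0) :=
          mul_le_mul_of_nonneg_right (le_abs_self C) (by linarith)
        linarith [hCδ.2]
      have p1 := bu_time_lip h.cρ h.dρ h0 hr1 z (fun s' hs' hs'' => (hC s' hs' (by linarith) z).1)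
      have p2 := bu_time_lip h.cu h.du h0 hr1 z (fun s' hs' hs'' => (hC s' hs' (by linarith) z).2.1)
      have p3 := bu_time_lip h.cS h.dS h0 hr1 z (fun s' hs' hs'' => (hC s' hs' (by linarith) z).2.2)
      rw [q1] at p1
      rw [q2, sub_zero] at p2
      rw [q3, sub_zero] at p3
      exact ⟨p1.trans hb, p2.trans hb, p3.trans hb⟩
  obtain ⟨n, hn⟩ := exists_nat_ge (t / δ)
  exact key n t ht le_rfl (by rwa [div_le_iff₀ hδ] at hn) x hx1 hx2

/-- Solution is trivial outside the expanding interval. -/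
lemma trivial_outside (h : BuSol γ τ ρ u S) {σt M : ℝ} (hσt : 0 < σt) (hσ : γ + 1 / τ ≤ σt ^ 2)
    (hM : ∀ x, M ≤ |x| → BuRef ρ u S (0, x)) (t : ℝ) (ht : 0 ≤ t) (x : ℝ)
    (hx : M + σt * t < |x|) : BuRef ρ u S (t, x) := by
  obtain ⟨c, hc1, hc2⟩ : ∃ c, σt < c ∧ M + c * t < |x| := by
    refine ⟨σt + (|x| - (M + σt * t)) / (2 * (t + 1)), ?_, ?_⟩
    · have : 0 < (|x| - (M + σt * t)) / (2 * (t + 1)) := div_pos (by linarith) (by linarith)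
      linarith
    · set d := |x| - (M + σt * t) with hd
      have : d / (2 * (t + 1)) * t < d := by
        rw [div_mul_eq_mul_div, div_lt_iff₀ (by linarith)]
        have : 0 < d := by linarith
        nlinarith
      linarith
  have hc0 : 0 < c := hσt.trans hc1
  have hcσ : γ + 1 / τ < c ^ 2 := by nlinarith
  rcases le_total 0 x with hx0 | hx0
  · rw [abs_of_nonneg hx0] at hc2
    refine h.propagation (A := M) (B := x + c * t + 1) hc0 hcσ
      (fun y hy _ => hM y (hy.le.trans (le_abs_self y))) t ht x hc2 (by linarith)
  · rw [abs_of_nonpos hx0] at hc2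
    refine h.propagation (A := x - c * t - 1) (B := -M) hc0 hcσ
      (fun y _ hy => hM y (by linarith [neg_le_abs y])) t ht x (by linarith) (by linarith)

end BuSol


lemma bu_riccati {y : ℝ → ℝ} {P σ M : ℝ} (hP : 0 < P) (hσ : 0 < σ) (hM : 0 < M)
    (hc : ContinuousOn y (Set.Icc 0 (M / σ)))
    (hd : ∀ t ∈ Set.Ioo 0 (M / σ), ∃ d, HasDerivAt y d t ∧ 0 ≤ d ∧
      (0 ≤ y t → y t ^ 2 / (2 * P * (M + σ * t) ^ 3) ≤ d))
    (h0 : 9 * σ * P * M ^ 2 < y 0) : False := by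
  have ht1 : 0 < M / σ := by positivity
  have hmono : MonotoneOn y (Set.Icc 0 (M / σ)) := by
    refine monotoneOn_of_deriv_nonneg (convex_Icc _ _) hc ?_ ?_
    · intro t ht
      rw [interior_Icc] at ht
      obtain ⟨d, h1, -⟩ := hd t ht
      exact h1.differentiableAt.differentiableWithinAt
    · intro t ht
      rw [interior_Icc] at ht
      obtain ⟨d, h1, h2, -⟩ := hd t ht
      rwa [h1.deriv]
  have hq : 0 < σ * P * M ^ 2 := by positivity
  have hypos : ∀ t ∈ Set.Icc 0 (M / σ), 0 < y t := by
    intro t ht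
    have := hmono ⟨le_rfl, ht1.le⟩ ht ht.1
    linarith
  have hX : ∀ t ∈ Set.Icc 0 (M / σ), 0 < M + σ * t := by
    intro t ht
    have := mul_nonneg hσ.le ht.1
    linarith
  have hψ : ∀ t ∈ Set.Ioo 0 (M / σ), ∃ d, HasDerivAt
      (fun t => (y t)⁻¹ - (4 * P * σ)⁻¹ * ((M + σ * t) ^ 2)⁻¹) d t ∧ d ≤ 0 := by
    intro t ht
    have ht' := Set.Ioo_subset_Icc_self ht
    obtain ⟨d, h1, -, h3⟩ := hd t ht
    have hy := hypos t ht'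
    have hXt := hX t ht'
    have i1 : HasDerivAt (fun t : ℝ => M + σ * t) σ t := by
      simpa using ((hasDerivAt_id t).const_mul σ).const_add M
    have i2 := (h1.inv hy.ne').sub (((i1.pow 2).inv (pow_pos hXt 2).ne').const_mul (4 * P * σ)⁻¹)
    refine ⟨_, i2, ?_⟩
    have h4 := h3 hy.le
    have e1 : (4 * P * σ)⁻¹ * (-(((2:ℕ):ℝ) * (M + σ * t) ^ (2 - 1) * σ) / ((M + σ * t) ^ 2) ^ 2)
        = - (1 / (2 * P * (M + σ * t) ^ 3)) := by
      generalize M + σ * t = X at *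
      push_cast
      field_simp
      ring
    have e2 : 1 / (2 * P * (M + σ * t) ^ 3) ≤ d / y t ^ 2 := by
      rw [le_div_iff₀ (by positivity)]
      calc _ = y t ^ 2 / (2 * P * (M + σ * t) ^ 3) := by ring
        _ ≤ d := h4
    have e3 : -d / y t ^ 2 = - (d / y t ^ 2) := by ring
    rw [e3]
    refine le_trans (le_of_eq (congrArg₂ (· - ·) rfl e1)) ?_
    linarith
  have hanti : AntitoneOn (fun t => (y t)⁻¹ - (4 * P * σ)⁻¹ * ((M + σ * t) ^ 2)⁻¹)
      (Set.Icc 0 (M / σ)) := by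
    refine antitoneOn_of_deriv_nonpos (convex_Icc _ _) ?_ ?_ ?_
    · refine (hc.inv₀ fun t ht => (hypos t ht).ne').sub (continuousOn_const.mul ?_)
      refine ContinuousOn.inv₀ (by fun_prop) fun t ht => (pow_pos (hX t ht) 2).ne'
    · intro t ht
      rw [interior_Icc] at ht
      obtain ⟨d, h1, -⟩ := hψ t ht
      exact h1.differentiableAt.differentiableWithinAt
    · intro t ht
      rw [interior_Icc] at ht
      obtain ⟨d, h1, h2⟩ := hψ t ht
      rwa [h1.deriv]
  have hfin := hanti ⟨le_rfl, ht1.le⟩ ⟨ht1.le, le_rfl⟩ ht1.le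
  simp only at hfin
  have p1 : 0 < (y (M / σ))⁻¹ := inv_pos.2 (hypos _ ⟨ht1.le, le_rfl⟩)
  have p2 : (y 0)⁻¹ ≤ (9 * σ * P * M ^ 2)⁻¹ := inv_anti₀ (by positivity) h0.le
  have e1 : M + σ * (M / σ) = 2 * M := by field_simp; ring
  rw [e1, mul_zero, add_zero] at hfin
  have e2 : (4 * P * σ)⁻¹ * ((2 * M) ^ 2)⁻¹ = (σ * P * M ^ 2)⁻¹ / 16 := by field_simp; ring
  have e3 : (4 * P * σ)⁻¹ * (M ^ 2)⁻¹ = (σ * P * M ^ 2)⁻¹ / 4 := by field_simp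
  have e4 : (9 * σ * P * M ^ 2)⁻¹ = (σ * P * M ^ 2)⁻¹ / 9 := by field_simp
  have p3 : 0 < (σ * P * M ^ 2)⁻¹ := inv_pos.2 hq
  rw [e2, e3] at hfin
  rw [e4] at p2
  linarith

namespace BuSol
variable {γ τ : ℝ} {ρ u S : ℝ × ℝ → ℝ}

set_option maxHeartbeats 1000000 in
lemma blow (h : BuSol γ τ ρ u S) {P σ M : ℝ} (hP : 1 ≤ P) (hσ : 0 < σ) (hM : 0 < M)
    (hσP : 1 ≤ 8 * P * σ ^ 2)
    (htriv : ∀ t, 0 ≤ t → ∀ x, M + σ * t < |x| → BuRef ρ u S (t, x))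
    (hm0 : 0 ≤ ∫ x in (-(2 * M + 1))..(2 * M + 1), (ρ (0, x) - 1))
    (hm1 : (∫ x in (-(2 * M + 1))..(2 * M + 1), (ρ (0, x) - 1)) ≤ 2 * M * (P - 1))
    (hE0 : (∫ x in (-(2 * M + 1))..(2 * M + 1), buE γ τ (ρ (0, x)) (u (0, x)) (S (0, x)))
      ≤ 2 * σ * M ^ 2 * P)
    (hF0 : 16 * σ * P * M ^ 2 <
      ∫ x in (-(2 * M + 1))..(2 * M + 1), x * (ρ (0, x) * u (0, x))) : False := by
  set B := 2 * M + 1 with hB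
  have hPp : 0 < P := by linarith
  have ht1 : 0 < M / σ := by positivity
  have hXB : ∀ t ∈ Set.Icc 0 (M / σ), M + σ * t < B := by
    intro t ht
    have := mul_le_mul_of_nonneg_left ht.2 hσ.le
    rw [mul_div_cancel₀ _ hσ.ne'] at this
    linarith
  have hrefB : ∀ t ∈ Set.Icc 0 (M / σ), BuRef ρ u S (t, B) := fun t ht =>
    htriv t ht.1 B (by rw [abs_of_pos (by linarith)]; exact hXB t ht)
  have hrefB' : ∀ t ∈ Set.Icc 0 (M / σ), BuRef ρ u S (t, -B) := fun t ht =>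
    htriv t ht.1 (-B) (by rw [abs_neg, abs_of_pos (by linarith)]; exact hXB t ht)
  have hcρ := h.cρ
  have hcu := h.cu
  have hcS := h.cS
  have hcp := h.cpow
  have hdρ := h.dρ
  have hdu := h.du
  have hdS := h.dS
  have hdp := h.dpow
  -- functionals
  set m : ℝ → ℝ := fun t => ∫ x in (-B)..B, (ρ (t, x) - 1) with hm
  set F : ℝ → ℝ := fun t => ∫ x in (-B)..B, x * (ρ (t, x) * u (t, x)) with hF
  set E : ℝ → ℝ := fun t => ∫ x in (-B)..B, buE γ τ (ρ (t, x)) (u (t, x)) (S (t, x)) with hE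
  have hmc : ContinuousOn m (Set.Ici 0) :=
    bu_cont_integral (e := fun p => ρ p - 1) (by fun_prop) _ _
  have hFc : ContinuousOn F (Set.Ici 0) :=
    bu_cont_integral (e := fun p => p.2 * (ρ p * u p)) (by fun_prop) _ _
  have hEc : ContinuousOn E (Set.Ici 0) := bu_cont_integral h.cE _ _
  have hmd : ∀ t ∈ Set.Ioo 0 (M / σ), HasDerivAt m 0 t := by
    intro t ht
    have ht' := Set.Ioo_subset_Icc_self ht
    have := bu_balance (e := fun p => ρ p - 1) (f := fun p => ρ p * u p) (g := fun _ => 0)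
      (by fun_prop) (by fun_prop) (fun s hs x => by
        have := h.mass s hs x
        simpa using this) (-B) B ht.1
    simpa [(hrefB t ht').2.1, (hrefB' t ht').2.1] using this
  have hEd : ∀ t ∈ Set.Ioo 0 (M / σ), HasDerivAt E (- ∫ x in (-B)..B, S (t, x) ^ 2) t := by
    intro t ht
    have ht' := Set.Ioo_subset_Icc_self ht
    have := bu_balance (e := fun p => buE γ τ (ρ p) (u p) (S p))
      (f := fun p => buF γ τ (ρ p) (u p) (S p)) (g := fun p => - S p ^ 2)
      h.dE h.dF (fun s hs x => by
        obtain ⟨et, fx, e1, e2, e3⟩ := h.energy hs x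
        rw [e1.deriv, e2.deriv, e3]) (-B) B ht.1
    refine this.congr_deriv ?_
    simp [buF, (hrefB t ht').2.1, (hrefB' t ht').2.1]
  have hFd : ∀ t ∈ Set.Ioo 0 (M / σ), HasDerivAt F
      (∫ x in (-B)..B, (ρ (t, x) * u (t, x) ^ 2 + (ρ (t, x) ^ γ - 1) - S (t, x))) t := by
    intro t ht
    have ht' := Set.Ioo_subset_Icc_self ht
    have := bu_balance (e := fun p => p.2 * (ρ p * u p))
      (f := fun p => p.2 * (ρ p * u p ^ 2 + (ρ p ^ γ - 1) - S p))
      (g := fun p => ρ p * u p ^ 2 + (ρ p ^ γ - 1) - S p)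
      (by fun_prop) (by fun_prop) (fun s hs x => by
        obtain ⟨rt, rx, vt, vx, st, sx, a1, a2, a3, a4, a5, a6, m1, m2, m3⟩ := h.derivs hs x
        have hp := h.pos (s, x) hs.le
        have k1 : deriv (fun r => x * (ρ (r, x) * u (r, x))) s = _ :=
          ((a1.mul a3).const_mul x).deriv
        have k2 : deriv (fun y => y * (ρ (s, y) * u (s, y) ^ 2 + (ρ (s, y) ^ γ - 1) - S (s, y))) x = _ :=
          ((hasDerivAt_id x).mul (((a2.mul (a4.pow 2)).add
            ((a2.rpow_const (p := γ) (Or.inl hp.ne')).sub_const 1)).sub a6)).deriv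
        simp only [k1, k2]
        simp only [id, Pi.add_apply, Pi.sub_apply, Pi.mul_apply, Pi.pow_apply, Nat.cast_ofNat]
        linear_combination x * u (s, x) * m1 + x * m2) (-B) B ht.1
    refine this.congr_deriv ?_
    obtain ⟨r1, r2, r3⟩ := hrefB t ht'
    obtain ⟨l1, l2, l3⟩ := hrefB' t ht'
    simp [r1, r2, r3, l1, l2, l3]
  have hmconst : ∀ t ∈ Set.Ioo 0 (M / σ), m t = m 0 := by
    intro t ht
    obtain ⟨c, hc1, hc2⟩ := exists_deriv_eq_slope m ht.1 (hmc.mono fun s hs => hs.1)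
      (fun s hs => (hmd s ⟨hs.1, hs.2.trans ht.2⟩).differentiableAt.differentiableWithinAt)
    rw [(hmd c ⟨hc1.1, hc1.2.trans ht.2⟩).deriv] at hc2
    have : t - 0 ≠ 0 := by linarith [ht.1]
    field_simp at hc2
    linarith
  have hEnn : ∀ t, 0 ≤ t → 0 ≤ E t := fun t ht =>
    intervalIntegral.integral_nonneg (by linarith) fun x _ =>
      buE_nonneg h.hγ h.hτ (h.pos (t, x) ht)
  set θ := 2 * σ ^ 2 * P with hθ
  have hθp : 0 < θ := by positivity
  set y : ℝ → ℝ := fun t => F t + θ * (M * t + σ * t ^ 2 / 2) + (E 0 - E t) / (2 * θ)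
    - 7 * σ * P * M ^ 2 with hy
  refine bu_riccati (y := y) hPp hσ hM ?_ ?_ ?_
  · have h1 : ContinuousOn F (Set.Icc 0 (M / σ)) := hFc.mono fun s hs => hs.1
    have h2 : ContinuousOn E (Set.Icc 0 (M / σ)) := hEc.mono fun s hs => hs.1
    have h3 : 2 * θ ≠ 0 := by positivity
    fun_prop (disch := assumption)
  · intro t ht
    have ht' := Set.Ioo_subset_Icc_self ht
    set X := M + σ * t with hX
    have hXM : M < X := by have := mul_pos hσ ht.1; linarith
    have hX0 : 0 < X := hM.trans hXM
    have hXB' : X ≤ B := (hXB t ht').le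
    have hsl : ∀ {f : ℝ × ℝ → ℝ}, ContinuousOn f {p : ℝ × ℝ | 0 ≤ p.1} →
        Continuous fun x => f (t, x) := fun hf => bu_cont_slice hf (fun _ => ht.1.le)
    have sρ := hsl hcρ
    have su := hsl hcu
    have sS := hsl hcS
    have sp := hsl hcp
    have hder := (((hFd t ht).add (((((hasDerivAt_id t).const_mul M).add
      ((((hasDerivAt_id t).pow 2).const_mul σ).div_const 2))).const_mul θ)).add
        (((hEd t ht).const_sub (E 0)).div_const (2 * θ))).sub_const (7 * σ * P * M ^ 2)
    -- pieces
    set J := ∫ x in (-B)..B, S (t, x) ^ 2 with hJ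
    have hFX : F t = ∫ x in (-X)..X, x * (ρ (t, x) * u (t, x)) :=
      bu_supp_integral hX0.le hXB' fun x hx => by rw [(htriv t ht.1.le x hx).2.1]; ring
    have hmX : m t = ∫ x in (-X)..X, (ρ (t, x) - 1) :=
      bu_supp_integral hX0.le hXB' fun x hx => by rw [(htriv t ht.1.le x hx).1]; ring
    have hJX : J = ∫ x in (-X)..X, S (t, x) ^ 2 :=
      bu_supp_integral hX0.le hXB' fun x hx => by rw [(htriv t ht.1.le x hx).2.2]; ring
    have hDX : (∫ x in (-B)..B, (ρ (t, x) * u (t, x) ^ 2 + (ρ (t, x) ^ γ - 1) - S (t, x)))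
        = ∫ x in (-X)..X, (ρ (t, x) * u (t, x) ^ 2 + (ρ (t, x) ^ γ - 1) - S (t, x)) :=
      bu_supp_integral hX0.le hXB' fun x hx => by
        obtain ⟨r1, r2, r3⟩ := htriv t ht.1.le x hx
        rw [r1, r2, r3]; simp
    have hmt := hmconst t ht
    have hγm : 0 ≤ γ * m t := by rw [hmt]; exact mul_nonneg (by linarith [h.hγ]) hm0
    have hlow : ∀ lam : ℝ, 2 * lam * F t - lam ^ 2 * X ^ 2 * (m t + 2 * X) + γ * m t
        - (θ * X + J / (2 * θ)) ≤
        ∫ x in (-X)..X, (ρ (t, x) * u (t, x) ^ 2 + (ρ (t, x) ^ γ - 1) - S (t, x)) := by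
      intro lam
      have c1 : Continuous fun x => 2 * lam * (x * (ρ (t, x) * u (t, x))) :=
        continuous_const.mul (continuous_id.mul (sρ.mul su))
      have c2 : Continuous fun x => (γ - lam ^ 2 * X ^ 2) * (ρ (t, x) - 1) :=
        continuous_const.mul (sρ.sub continuous_const)
      have c3 : Continuous fun _ : ℝ => (lam ^ 2 * X ^ 2 + θ / 2) := continuous_const
      have c4 : Continuous fun x => 1 / (2 * θ) * S (t, x) ^ 2 := continuous_const.mul (sS.pow 2)
      have c5 : Continuous fun x => ρ (t, x) * u (t, x) ^ 2 + (ρ (t, x) ^ γ - 1) - S (t, x) :=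
        ((sρ.mul (su.pow 2)).add (sp.sub continuous_const)).sub sS
      have hi : (∫ x in (-X)..X, (2 * lam * (x * (ρ (t, x) * u (t, x)))
          + (γ - lam ^ 2 * X ^ 2) * (ρ (t, x) - 1) - (lam ^ 2 * X ^ 2 + θ / 2)
          - 1 / (2 * θ) * S (t, x) ^ 2))
          = 2 * lam * F t - lam ^ 2 * X ^ 2 * (m t + 2 * X) + γ * m t
        - (θ * X + J / (2 * θ)) := by
        rw [intervalIntegral.integral_sub, intervalIntegral.integral_sub,
          intervalIntegral.integral_add, intervalIntegral.integral_const_mul,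
          intervalIntegral.integral_const_mul, intervalIntegral.integral_const_mul,
          intervalIntegral.integral_const, ← hFX, ← hmX, ← hJX, smul_eq_mul]
        · ring
        · exact c1.intervalIntegrable _ _
        · exact c2.intervalIntegrable _ _
        · exact (c1.add c2).intervalIntegrable _ _
        · exact c3.intervalIntegrable _ _
        · exact ((c1.add c2).sub c3).intervalIntegrable _ _
        · exact c4.intervalIntegrable _ _
      rw [← hi]
      refine intervalIntegral.integral_mono_on (by linarith)
        ((((c1.add c2).sub c3).sub c4).intervalIntegrable _ _)
        (c5.intervalIntegrable _ _) fun x hx => ?_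
      have hp := h.pos (t, x) ht.1.le
      have b1 : γ * (ρ (t, x) - 1) ≤ ρ (t, x) ^ γ - 1 := by
        have := one_add_mul_self_le_rpow_one_add (s := ρ (t, x) - 1) (by linarith) h.hγ.le
        rw [add_sub_cancel] at this
        linarith
      have b2 : S (t, x) ≤ θ / 2 + 1 / (2 * θ) * S (t, x) ^ 2 := by
        have e : θ / 2 + 1 / (2 * θ) * S (t, x) ^ 2 - S (t, x) = (θ - S (t, x)) ^ 2 / (2 * θ) := by
          field_simp; ring
        have : 0 ≤ (θ - S (t, x)) ^ 2 / (2 * θ) := by positivity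
        linarith
      have b3 : 0 ≤ ρ (t, x) * (u (t, x) - lam * x) ^ 2 := by positivity
      have b4 : lam ^ 2 * x ^ 2 * ρ (t, x) ≤ lam ^ 2 * X ^ 2 * ρ (t, x) := by
        have : x ^ 2 ≤ X ^ 2 := sq_le_sq' hx.1 hx.2
        gcongr
      linarith
    have hmP : m t + 2 * X ≤ 2 * X * P := by
      rw [hmt]
      have : 2 * M * (P - 1) ≤ 2 * X * (P - 1) := by
        have : 0 ≤ P - 1 := by linarith
        gcongr
      linarith
    have hFsq : F t ^ 2 / (2 * P * X ^ 3) - (θ * X + J / (2 * θ)) ≤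
        ∫ x in (-X)..X, (ρ (t, x) * u (t, x) ^ 2 + (ρ (t, x) ^ γ - 1) - S (t, x)) := by
      refine le_trans ?_ (hlow (F t / (2 * P * X ^ 3)))
      set lam := F t / (2 * P * X ^ 3) with hlam
      have c1 : lam ^ 2 * X ^ 2 * (m t + 2 * X) ≤ lam ^ 2 * X ^ 2 * (2 * X * P) := by gcongr
      have c2 : 2 * lam * F t - lam ^ 2 * X ^ 2 * (2 * X * P) = F t ^ 2 / (2 * P * X ^ 3) := by
        rw [hlam]; field_simp; ring
      linarith
    have hFy : y t ≤ F t := by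
      have d1 : θ * (M * t + σ * t ^ 2 / 2) ≤ 3 * σ * P * M ^ 2 := by
        have q1 : σ * t ≤ M := by
          have := mul_le_mul_of_nonneg_left ht'.2 hσ.le
          rwa [mul_div_cancel₀ _ hσ.ne'] at this
        have q0 : 0 ≤ σ * t := mul_nonneg hσ.le ht'.1
        have e : θ * (M * t + σ * t ^ 2 / 2) = (σ * P) * (2 * M * (σ * t) + (σ * t) ^ 2) := by
          rw [hθ]; ring
        rw [e]
        have : 2 * M * (σ * t) + (σ * t) ^ 2 ≤ 3 * M ^ 2 := by nlinarith
        have := mul_le_mul_of_nonneg_left this (mul_nonneg hσ.le hPp.le)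
        linarith
      have d2 : (E 0 - E t) / (2 * θ) ≤ 4 * σ * P * M ^ 2 := by
        rw [div_le_iff₀ (by positivity)]
        have := hEnn t ht.1.le
        have hE0' : E 0 ≤ 2 * σ * M ^ 2 * P := hE0
        have q : 2 * σ * M ^ 2 * P * 1 ≤ 2 * σ * M ^ 2 * P * (8 * P * σ ^ 2) :=
          mul_le_mul_of_nonneg_left hσP (by positivity)
        have e : 4 * σ * P * M ^ 2 * (2 * θ) = 2 * σ * M ^ 2 * P * (8 * P * σ ^ 2) := by
          rw [hθ]; ring
        linarith
      simp only [hy]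
      linarith
    have hbig : F t ^ 2 / (2 * P * X ^ 3) ≤
        (∫ x in (-B)..B, (ρ (t, x) * u (t, x) ^ 2 + (ρ (t, x) ^ γ - 1) - S (t, x)))
          + θ * X + J / (2 * θ) := by
      rw [hDX]; linarith
    refine ⟨(∫ x in (-B)..B, (ρ (t, x) * u (t, x) ^ 2 + (ρ (t, x) ^ γ - 1) - S (t, x)))
          + θ * X + J / (2 * θ), hder.congr_deriv ?_, ?_, fun hy0 => ?_⟩
    · simp only [id, hX]; push_cast; ring
    · exact le_trans (by positivity) hbig
    · refine le_trans ?_ hbig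
      gcongr
  · have : y 0 = F 0 - 7 * σ * P * M ^ 2 := by simp [hy]
    rw [this]
    have : 16 * σ * P * M ^ 2 < F 0 := hF0
    linarith

end BuSol


lemma bu_F0 {ρ0 u0 : ℝ → ℝ} {Pmin Pmax L M : ℝ} (hρc : Continuous ρ0) (huc : Continuous u0)
    (hmin : ∀ x, Pmin ≤ ρ0 x) (hmax : ∀ x, ρ0 x ≤ Pmax) (hPmin : 0 < Pmin) (hL : 0 < L)
    (hM : 4 ≤ M) (hodd : ∀ x : ℝ, u0 (-x) = - u0 x) (hbd : ∀ x : ℝ, |u0 x| ≤ L)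
    (hpl : ∀ x ∈ Set.Icc (1 : ℝ) (M - 1), u0 x = L) (hbig : 16 * Pmax ≤ Pmin * M) :
    L / 2 * Pmin * M ^ 2 ≤ ∫ x in (-M)..M, x * (ρ0 x * u0 x) := by
  have hPmax : 0 < Pmax := lt_of_lt_of_le hPmin ((hmin 0).trans (hmax 0))
  have hc : Continuous fun x => x * (ρ0 x * u0 x) := continuous_id.mul (hρc.mul huc)
  have hi : ∀ a b, IntervalIntegrable (fun x => x * (ρ0 x * u0 x)) volume a b :=
    fun a b => hc.intervalIntegrable a b
  have hsplit : ∫ x in (-M)..M, x * (ρ0 x * u0 x) =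
      (∫ x in (-M)..(-(M - 1)), x * (ρ0 x * u0 x)) + (∫ x in (-(M - 1))..(-1), x * (ρ0 x * u0 x))
      + (∫ x in (-1)..1, x * (ρ0 x * u0 x)) + (∫ x in (1)..(M - 1), x * (ρ0 x * u0 x))
      + (∫ x in (M - 1)..M, x * (ρ0 x * u0 x)) := by
    rw [intervalIntegral.integral_add_adjacent_intervals (hi _ _) (hi _ _),
      intervalIntegral.integral_add_adjacent_intervals (hi _ _) (hi _ _),
      intervalIntegral.integral_add_adjacent_intervals (hi _ _) (hi _ _),
      intervalIntegral.integral_add_adjacent_intervals (hi _ _) (hi _ _)]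
  have hgen : ∀ a b K : ℝ, a ≤ b → (∀ x ∈ Set.Icc a b, |x| ≤ K) →
      -(K * (Pmax * L)) * (b - a) ≤ ∫ x in a..b, x * (ρ0 x * u0 x) := by
    intro a b K hab hK
    have := intervalIntegral.integral_mono_on (f := fun _ => -(K * (Pmax * L))) hab
      (continuous_const.intervalIntegrable _ _) (hi a b) (fun x hx => by
        have h1 : |x * (ρ0 x * u0 x)| ≤ K * (Pmax * L) := by
          rw [abs_mul, abs_mul, abs_of_pos (hPmin.trans_le (hmin x))]
          exact mul_le_mul (hK x hx) (mul_le_mul (hmax x) (hbd x) (abs_nonneg _) hPmax.le)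
            (mul_nonneg (hPmin.le.trans (hmin x)) (abs_nonneg _)) ((abs_nonneg _).trans (hK x hx))
        exact (abs_le.1 h1).1)
    rw [intervalIntegral.integral_const, smul_eq_mul] at this
    linarith
  have k1 := hgen (-M) (-(M - 1)) M (by linarith) (fun x hx => abs_le.2 ⟨hx.1, by linarith [hx.2]⟩)
  have k3 := hgen (-1) 1 1 (by linarith) (fun x hx => abs_le.2 ⟨hx.1, hx.2⟩)
  have k5 := hgen (M - 1) M M (by linarith) (fun x hx => abs_le.2 ⟨by linarith [hx.1], hx.2⟩)
  have k4 : Pmin * L * (((M - 1) ^ 2 - 1 ^ 2) / 2) ≤ ∫ x in (1)..(M - 1), x * (ρ0 x * u0 x) := by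
    rw [← integral_id, ← intervalIntegral.integral_const_mul]
    refine intervalIntegral.integral_mono_on (by linarith)
      ((continuous_const.mul continuous_id).intervalIntegrable _ _) (hi _ _) fun x hx => ?_
    rw [hpl x hx]
    have : 0 ≤ x * L := mul_nonneg (by linarith [hx.1]) hL.le
    have := mul_le_mul_of_nonneg_right (hmin x) this
    linarith
  have k2 : -(Pmin * L) * (((-1) ^ 2 - (-(M - 1)) ^ 2) / 2) ≤
      ∫ x in (-(M - 1))..(-1), x * (ρ0 x * u0 x) := by
    rw [← integral_id, ← intervalIntegral.integral_const_mul]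
    refine intervalIntegral.integral_mono_on (by linarith)
      ((continuous_const.mul continuous_id).intervalIntegrable _ _) (hi _ _) fun x hx => ?_
    have hu : u0 x = - L := by
      have := hpl (-x) ⟨by linarith [hx.2], by linarith [hx.1]⟩
      rw [hodd] at this; linarith
    rw [hu]
    have : 0 ≤ (-x) * L := mul_nonneg (by linarith [hx.2]) hL.le
    have := mul_le_mul_of_nonneg_right (hmin x) this
    linarith
  rw [hsplit]
  have e1 : 16 * Pmax * (L * M) ≤ Pmin * M * (L * M) :=
    mul_le_mul_of_nonneg_right hbig (by positivity)
  have e2 : Pmin * (L * M) ≤ Pmax * (L * M) :=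
    mul_le_mul_of_nonneg_right ((hmin 0).trans (hmax 0)) (by positivity)
  have e3 : 4 * (Pmax * L) ≤ M * (Pmax * L) := mul_le_mul_of_nonneg_right hM (by positivity)
  have e4 : 0 < Pmax * L := by positivity
  nlinarith

lemma bu_pderivT {f : ℝ × ℝ → ℝ} {t x : ℝ} (ht : 0 < t) :
    pderivT ⊤ f (t, x) = deriv (fun s => f (s, x)) t := by
  unfold pderivT
  refine derivWithin_of_mem_nhds ?_
  filter_upwards [lt_mem_nhds ht] with s hs
  exact ⟨hs.le, EReal.coe_lt_top s⟩


/-- Blow-up of solutions of the relaxation system for some large data: under the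
largeness conditions on the plateau velocity profile `u₀` and the support parameter
`M`, no solution with initial data `(ρ₀, u₀, S₀)` can exist globally in time,
i.e. the existence time `T` is finite. -/
theorem blow_up_for_large_data
    (γ τ R : ℝ) (hγ : 1 < γ) (hτ : 0 < τ) (hR : 0 < R)
    (ρ0 S0 : ℝ → ℝ) (hρ0reg : ContDiff ℝ 1 ρ0) (hS0reg : ContDiff ℝ 1 S0)
    (hρ0pos : ∀ x : ℝ, 0 < ρ0 x)
    (hout : ∀ x : ℝ, R ≤ |x| → ρ0 x = 1 ∧ S0 x = 0)
    (hmass0 : 0 ≤ ∫ x : ℝ, (ρ0 x - 1))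
    (Pmax Pmin : ℝ)
    (hPmax : IsGreatest (Set.range ρ0) Pmax) (hPmin : IsLeast (Set.range ρ0) Pmin)
    (σ σt L : ℝ) (hσ : σ = Real.sqrt (γ + 1 / τ))
    (hσtpos : 0 < σt) (hσt : σt ^ 2 = max (σ ^ 2) (1 / (8 * Pmax)))
    (hL : 0 < L)
    (hLbig : max (Real.sqrt (8 * Pmax)) (16 * σt * Pmax) < L / 2 * Pmin)
    (H0 : ℝ)
    (hH0 : H0 = ∫ x : ℝ,
      ((ρ0 x ^ γ - 1 - γ * (ρ0 x - 1)) / (γ - 1) + τ * ρ0 x * S0 x ^ 2 / 2))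
    (M : ℤ) (hMeven : Even M) (hM4 : 4 ≤ M) (hMR : R ≤ (M : ℝ))
    (hMbig : H0 + Pmax * L ^ 2 * (M : ℝ) ≤ 2 * σt * (M : ℝ) ^ 2 * Pmax)
    (u0 : ℝ → ℝ) (hu0reg : ContDiff ℝ 1 u0)
    (hu0odd : ∀ x : ℝ, u0 (-x) = - u0 x)
    (hu0bdd : ∀ x : ℝ, |u0 x| ≤ L)
    (hu0plateau : ∀ x ∈ Set.Icc (1 : ℝ) ((M : ℝ) - 1), u0 x = L)
    (hu0supp : ∀ x : ℝ, (M : ℝ) ≤ |x| → u0 x = 0)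
    (hu0L2 : (∫ x : ℝ, u0 x ^ 2) ≤ 2 * L ^ 2 * (M : ℝ))
    (T : EReal) (hT : 0 < T)
    (ρ u S : ℝ × ℝ → ℝ)
    (hρ : ContDiffOn ℝ 1 ρ {p : ℝ × ℝ | 0 ≤ p.1 ∧ (p.1 : EReal) < T})
    (hu : ContDiffOn ℝ 1 u {p : ℝ × ℝ | 0 ≤ p.1 ∧ (p.1 : EReal) < T})
    (hS : ContDiffOn ℝ 1 S {p : ℝ × ℝ | 0 ≤ p.1 ∧ (p.1 : EReal) < T})
    (hpos : ∀ p : ℝ × ℝ, 0 ≤ p.1 → (p.1 : EReal) < T → 0 < ρ p)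
    (hmass : ∀ p : ℝ × ℝ, 0 ≤ p.1 → (p.1 : EReal) < T →
      pderivT T ρ p + pderivX (fun q => ρ q * u q) p = 0)
    (hmom : ∀ p : ℝ × ℝ, 0 ≤ p.1 → (p.1 : EReal) < T →
      ρ p * pderivT T u p + ρ p * u p * pderivX u p + pderivX (fun q => ρ q ^ γ) p
        = pderivX S p)
    (hrelax : ∀ p : ℝ × ℝ, 0 ≤ p.1 → (p.1 : EReal) < T →
      τ * ρ p * (pderivT T S p + u p * pderivX S p) - pderivX u p = - S p)
    (hinit : ∀ x : ℝ, ρ (0, x) = ρ0 x ∧ u (0, x) = u0 x ∧ S (0, x) = S0 x)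
    (hbdd : ∀ t : ℝ, 0 ≤ t → (t : EReal) < T → ∃ C : ℝ,
      ∀ s ∈ Set.Icc (0 : ℝ) t, ∀ x : ℝ,
        |ρ (s, x)| ≤ C ∧ |u (s, x)| ≤ C ∧ |S (s, x)| ≤ C ∧
        |pderivT T ρ (s, x)| ≤ C ∧ |pderivT T u (s, x)| ≤ C ∧ |pderivT T S (s, x)| ≤ C ∧
        |pderivX ρ (s, x)| ≤ C ∧ |pderivX u (s, x)| ≤ C ∧ |pderivX S (s, x)| ≤ C) :
    T < ⊤ := by
  by_contra hTt
  have hTtop : T = ⊤ := not_lt_top_iff.1 hTt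
  subst hTtop
  have hD : {p : ℝ × ℝ | 0 ≤ p.1 ∧ (p.1 : EReal) < ⊤} = {p : ℝ × ℝ | 0 ≤ p.1} := by
    ext p; simp [EReal.coe_lt_top]
  rw [hD] at hρ hu hS
  have hsub : {p : ℝ × ℝ | 0 < p.1} ⊆ {p : ℝ × ℝ | 0 ≤ p.1} := fun p (hp : 0 < p.1) => show (0 : ℝ) ≤ p.1 from hp.le
  have hsol : BuSol γ τ ρ u S :=
    { hγ := hγ
      hτ := hτ
      cρ := hρ.continuousOn
      cu := hu.continuousOn
      cS := hS.continuousOn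
      dρ := hρ.mono hsub
      du := hu.mono hsub
      dS := hS.mono hsub
      pos := fun p hp => hpos p hp (EReal.coe_lt_top _)
      mass := fun t ht x => by
        have := hmass (t, x) ht.le (EReal.coe_lt_top _)
        rw [bu_pderivT ht] at this
        exact this
      mom := fun t ht x => by
        have := hmom (t, x) ht.le (EReal.coe_lt_top _)
        rw [bu_pderivT ht] at this
        exact this
      relax := fun t ht x => by
        have := hrelax (t, x) ht.le (EReal.coe_lt_top _)
        rw [bu_pderivT ht] at this
        exact this
      bdd := fun t ht => by
        obtain ⟨C, hC⟩ := hbdd t ht (EReal.coe_lt_top _)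
        refine ⟨C, fun s hs hst x => ?_⟩
        obtain ⟨-, -, -, h1, h2, h3, -⟩ := hC s ⟨hs.le, hst⟩ x
        rw [bu_pderivT hs] at h1 h2 h3
        exact ⟨h1, h2, h3⟩ }
  -- elementary facts on the constants
  have hmax : ∀ x, ρ0 x ≤ Pmax := fun x => hPmax.2 ⟨x, rfl⟩
  have hmin : ∀ x, Pmin ≤ ρ0 x := fun x => hPmin.2 ⟨x, rfl⟩
  have hρR : ρ0 R = 1 := (hout R (le_abs_self R)).1
  have hP1 : 1 ≤ Pmax := hρR ▸ hmax R
  have hPm1 : Pmin ≤ 1 := hρR ▸ hmin R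
  have hPm0 : 0 < Pmin := by
    obtain ⟨z, hz⟩ := hPmin.1
    rw [← hz]; exact hρ0pos z
  have hP0 : 0 < Pmax := by linarith
  set Mr : ℝ := (M : ℝ) with hMr
  have hM4' : (4 : ℝ) ≤ Mr := by rw [hMr]; exact_mod_cast hM4
  have hM0 : 0 < Mr := by linarith
  have hσσ : γ + 1 / τ ≤ σt ^ 2 := by
    have h1 : σ ^ 2 = γ + 1 / τ := by
      rw [hσ, Real.sq_sqrt]
      positivity
    rw [hσt, ← h1]
    exact le_max_left _ _
  have hσP : 1 ≤ 8 * Pmax * σt ^ 2 := by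
    have h1 : 1 / (8 * Pmax) ≤ σt ^ 2 := by rw [hσt]; exact le_max_right _ _
    rw [div_le_iff₀ (by positivity)] at h1
    linarith
  have hL16 : 16 * σt * Pmax < L / 2 * Pmin := lt_of_le_of_lt (le_max_right _ _) hLbig
  have hL8 : Real.sqrt (8 * Pmax) < L / 2 * Pmin := lt_of_le_of_lt (le_max_left _ _) hLbig
  have hL1 : 1 ≤ L := by
    have h1 : (1 : ℝ) ≤ Real.sqrt (8 * Pmax) := Real.one_le_sqrt.2 (by linarith)
    have h2 : L * Pmin ≤ L * 1 := mul_le_mul_of_nonneg_left hPm1 hL.le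
    linarith
  -- energy of the density and stress part
  have hH0' : H0 = ∫ x in (-Mr)..Mr, (buG γ (ρ0 x) + τ * ρ0 x * S0 x ^ 2 / 2) := by
    rw [hH0]
    symm
    refine bu_supp_integral' hM0.le fun x hx => ?_
    obtain ⟨h1, h2⟩ := hout x (hMR.trans hx.le)
    rw [h1, h2]; simp [buG]
  have hH0n : 0 ≤ H0 := by
    rw [hH0']
    refine intervalIntegral.integral_nonneg (by linarith) fun x _ => ?_
    have := buG_nonneg hγ (hρ0pos x)
    have := hρ0pos x
    positivity
  have hML : L ^ 2 ≤ 2 * σt * Mr := by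
    have h1 : Pmax * L ^ 2 * Mr ≤ 2 * σt * Mr ^ 2 * Pmax := by linarith
    have h2 : (L ^ 2) * (Pmax * Mr) ≤ (2 * σt * Mr) * (Pmax * Mr) := by linarith
    exact le_of_mul_le_mul_right h2 (by positivity)
  have hbig : 16 * Pmax ≤ Pmin * Mr := by
    have h1 : σt * (16 * Pmax) ≤ σt * (Pmin * Mr) := by
      have a1 : 32 * σt * Pmax * L ≤ L * Pmin * L := mul_le_mul_of_nonneg_right (by linarith) hL.le
      have a2 : L ^ 2 * Pmin ≤ 2 * σt * Mr * Pmin := mul_le_mul_of_nonneg_right hML hPm0.le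
      have a3 : 32 * σt * Pmax * 1 ≤ 32 * σt * Pmax * L := mul_le_mul_of_nonneg_left hL1 (by positivity)
      linarith
    exact le_of_mul_le_mul_left h1 hσtpos
  have hρc := hρ0reg.continuous
  have hSc := hS0reg.continuous
  have huc := hu0reg.continuous
  have hinit0 : ∀ x, Mr ≤ |x| → BuRef ρ u S (0, x) := by
    intro x hx
    obtain ⟨h1, h2, h3⟩ := hinit x
    obtain ⟨h4, h5⟩ := hout x (hMR.trans hx)
    exact ⟨h1.trans h4, h2.trans (hu0supp x hx), h3.trans h5⟩
  have hMB : Mr ≤ 2 * Mr + 1 := by linarith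
  have hmI : ∫ x in (-(2 * Mr + 1))..(2 * Mr + 1), (ρ (0, x) - 1)
      = ∫ x in (-Mr)..Mr, (ρ0 x - 1) := by
    simp only [(hinit _).1]
    refine bu_supp_integral hM0.le hMB fun x hx => ?_
    rw [(hout x (hMR.trans hx.le)).1, sub_self]
  refine hsol.blow (P := Pmax) (σ := σt) (M := Mr) hP1 hσtpos hM0 hσP
    (fun t ht x hx => hsol.trivial_outside hσtpos hσσ hinit0 t ht x hx) ?_ ?_ ?_ ?_
  · rw [hmI, bu_supp_integral' hM0.le fun x hx => by
      rw [(hout x (hMR.trans hx.le)).1, sub_self]]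
    exact hmass0
  · rw [hmI]
    have := intervalIntegral.integral_mono_on (f := fun x => ρ0 x - 1) (g := fun _ => Pmax - 1)
      (μ := volume) (a := -Mr) (b := Mr) (by linarith)
      ((hρc.sub continuous_const).intervalIntegrable _ _)
      (continuous_const.intervalIntegrable _ _) (fun x _ => by linarith [hmax x])
    rw [intervalIntegral.integral_const, smul_eq_mul] at this
    linarith
  · simp only [(hinit _).1, (hinit _).2.1, (hinit _).2.2]
    rw [bu_supp_integral hM0.le hMB fun x hx => by
      obtain ⟨h1, h2⟩ := hout x (hMR.trans hx.le)
      rw [h1, h2, hu0supp x hx.le, buE_ref]]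
    have hGc : Continuous fun x => buG γ (ρ0 x) + τ * ρ0 x * S0 x ^ 2 / 2 := by
      have : Continuous fun x => ρ0 x ^ γ := hρc.rpow_const fun x => Or.inl (hρ0pos x).ne'
      unfold buG
      fun_prop
    have hle : (∫ x in (-Mr)..Mr, buE γ τ (ρ0 x) (u0 x) (S0 x)) ≤
        ∫ x in (-Mr)..Mr, (Pmax / 2 * u0 x ^ 2 + (buG γ (ρ0 x) + τ * ρ0 x * S0 x ^ 2 / 2)) := by
      have hEq : (fun x => buE γ τ (ρ0 x) (u0 x) (S0 x)) =
          fun x => ρ0 x * u0 x ^ 2 / 2 + (buG γ (ρ0 x) + τ * ρ0 x * S0 x ^ 2 / 2) := by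
        funext x; unfold buE; ring
      simp only [hEq]
      refine intervalIntegral.integral_mono_on (by linarith)
        (Continuous.intervalIntegrable (Continuous.add (by fun_prop) hGc) _ _)
        (Continuous.intervalIntegrable (Continuous.add (by fun_prop) hGc) _ _) fun x _ => ?_
      have := mul_le_mul_of_nonneg_right (hmax x) (sq_nonneg (u0 x))
      linarith
    refine hle.trans ?_
    rw [intervalIntegral.integral_add (Continuous.intervalIntegrable (by fun_prop) _ _)
      (hGc.intervalIntegrable _ _), ← hH0', intervalIntegral.integral_const_mul,
      bu_supp_integral' hM0.le fun x hx => by rw [hu0supp x hx.le]; ring]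
    have := mul_le_mul_of_nonneg_left hu0L2 (by positivity : 0 ≤ Pmax / 2)
    linarith
  · simp only [(hinit _).1, (hinit _).2.1]
    rw [bu_supp_integral hM0.le hMB fun x hx => by rw [hu0supp x hx.le]; ring]
    have h1 := bu_F0 hρc huc hmin hmax hPm0 hL hM4' hu0odd hu0bdd hu0plateau hbig
    have h2 := mul_lt_mul_of_pos_right hL16 (by positivity : 0 < Mr ^ 2)
    linarith
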